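/- For all words v, w over the digit alphabet {1,2}, with π₁ = (−2,−2,−2,0,0,1) and f₁ = (0,0,0,0,0,1), one has π₁ᵀ·Ã(v,w)·f₁ = 1 − 2·((v)₃ − (w)₃)²; consequently π₁ᵀ·Ã(v,w)·f₁ > 0 if and only if v = w, and likewise π₁ᵀ·Ã(v,w)·f₁ ≥ 0 if and only if v = w. -/

import Mathlib

/-!
The vector `f₁` selects the last column of `Ã(v,w)`, and `π₁` combines its entries into
`4(v)₃(w)₃ - 2(w)₃² - 2(v)₃² + 1 = 1 - 2((v)₃ - (w)₃)²`. This integer is `1` when the two values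
agree and at most `-1` otherwise, so both sign conditions amount to `(v)₃ = (w)₃`. Since base-3
numerals with digits in `{1,2}` have unique values (`val3_injective`), that means `v = w`.
-/

open Matrix

/-- The base-3 value `(v)₃` of a word over the digit alphabet `{1,2}`
(`false` representing the digit `1`, `true` the digit `2`), most significant
digit first. -/
def val3 (v : List Bool) : ℕ :=
  v.foldl (fun a b => 3 * a + (if b then 2 else 1)) 0

/-- The 6×6 integer matrix `Ã(v,w)` (Hirvensalo's variant). -/
def matAt (v w : List Bool) : Matrix (Fin 6) (Fin 6) ℤ :=
  !![3^(v.length + w.length), 0, 0, -(val3 v : ℤ) * 3^w.length,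
        (val3 w : ℤ) * 3^v.length, -2 * (val3 v : ℤ) * (val3 w : ℤ);
     0, 3^(2 * w.length), 0, (val3 w : ℤ) * 3^w.length, 0, (val3 w : ℤ)^2;
     0, 0, 3^(2 * v.length), 0, -(val3 v : ℤ) * 3^v.length, (val3 v : ℤ)^2;
     0, 0, 0, 3^w.length, 0, 2 * (val3 w : ℤ);
     0, 0, 0, 0, 3^v.length, -2 * (val3 v : ℤ);
     0, 0, 0, 0, 0, 1]

/-- The starting vector `π₁`. -/
def π₁ : Fin 6 → ℤ := ![-2, -2, -2, 0, 0, 1]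

/-- The ending vector `f₁`. -/
def f₁ : Fin 6 → ℤ := ![0, 0, 0, 0, 0, 1]

theorem val3_append_singleton (v : List Bool) (b : Bool) :
    val3 (v ++ [b]) = 3 * val3 v + (if b then 2 else 1) := by
  simp [val3]

/-- The last digit is nonzero and is the residue of the value mod 3, so words can be compared
from the right, digit by digit. -/
theorem val3_injective : Function.Injective val3 := by
  intro v
  induction v using List.reverseRecOn with
  | nil =>
    intro w h
    rcases List.eq_nil_or_concat' w with rfl | ⟨w, c, rfl⟩
    · rfl
    · rw [val3_append_singleton] at h
      simp only [val3, List.foldl_nil] at h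
      split_ifs at h
  | append_singleton v b ih =>
    intro w h
    rcases List.eq_nil_or_concat' w with rfl | ⟨w, c, rfl⟩
    · rw [val3_append_singleton] at h
      simp only [val3, List.foldl_nil] at h
      split_ifs at h
    · rw [val3_append_singleton, val3_append_singleton] at h
      have hbc : b = c := by
        cases b <;> cases c <;> simp at h ⊢ <;> omega
      subst hbc
      rw [ih (a₂ := w) (by omega)]

/-- `π₁ᵀ·Ã(v,w)·f₁ = 1 − 2·((v)₃ − (w)₃)²`; this is positive iff `v = w`, and
likewise nonnegative iff `v = w`. -/
theorem matAt_equality_test (v w : List Bool) :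
    π₁ ⬝ᵥ (matAt v w *ᵥ f₁) = 1 - 2 * ((val3 v : ℤ) - (val3 w : ℤ))^2 ∧
    (0 < π₁ ⬝ᵥ (matAt v w *ᵥ f₁) ↔ v = w) ∧
    (0 ≤ π₁ ⬝ᵥ (matAt v w *ᵥ f₁) ↔ v = w) := by
  have key : π₁ ⬝ᵥ (matAt v w *ᵥ f₁) = 1 - 2 * ((val3 v : ℤ) - (val3 w : ℤ))^2 := by
    simp [π₁, f₁, matAt, Matrix.mulVec, dotProduct, Fin.sum_univ_succ]
    ring
  have eq_of_nonneg : 0 ≤ 1 - 2 * ((val3 v : ℤ) - (val3 w : ℤ))^2 → v = w := by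
    intro h
    have hsq : ((val3 v : ℤ) - (val3 w : ℤ))^2 = 0 := by
      have := sq_nonneg ((val3 v : ℤ) - (val3 w : ℤ))
      omega
    have hval : (val3 v : ℤ) = val3 w := sub_eq_zero.mp (pow_eq_zero_iff two_ne_zero |>.mp hsq)
    exact val3_injective (by exact_mod_cast hval)
  rw [key]
  refine ⟨rfl, ⟨fun h => eq_of_nonneg h.le, ?_⟩, ⟨eq_of_nonneg, ?_⟩⟩ <;>
  · rintro rfl
    simp
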